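/- Let G = (U, W, E) be a bipartite graph with a strong ordering ≺, let s ≥ 1, and let P be an s-star partition of G with minimum score. Then for every star X ∈ P there is at most one star Y ∈ P with Y ≠ X such that X and Y are interleaving, and for every other star Z ∈ P \ {X, Y}, the stars X and Z are non-crossing. -/

import Mathlib

/-!
Suppose a partition `P` has minimum score. The proof is a series of exchange arguments (`exchange`):
two stars of `P` are replaced by two stars on the same vertices, with a smaller score.

*Centers in the same part* (`same_inl`, `same_inr`). Giving the leftmost half of the combined leaves
to the left center and the rest to the right center is allowed by the strong ordering, does not
increase the width (`hull_sort`) or the crossings with third stars, and uncrosses the pair. Hence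
two such stars never cross, and their leaf sets are separated in the order of the centers. In
particular a vertex lies in the scope of at most one star with center in a given part
(`unique_scope`), so a star interleaves with at most one other star.

*Centers in different parts.* Let `c ∈ U` have leaves `L` and `d ∈ W` have leaves `M`, with a
crossing such that `c < m` and `d < l` for some `m ∈ M`, `l ∈ L`; the other kind of crossing is
obtained by reversing both orders. If the stars are not interleaving, then `L` lies entirely right
of `d` or `M` lies entirely right of `c`.

* If only one of these holds, say `L` lies right of `d` but `c` is between two leaves in `M`, let
  the last leaf of `M` and `c` exchange their roles. The width drops (`no_center_in_scope`).
* If both hold, choose such a pair with the fewest vertices between `c` and `M`. The previous facts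
  show that every vertex after `c` up to the last leaf of `M` belongs to `M`. The same exchange then
  preserves the width and all crossings with third stars and uncrosses the pair (`no_both_right`).

The symmetries used are the exchange of the two parts (`IsMin.swap`) and the reversal of both
orders (`IsMin.dual`).
-/

open scoped Classical

/-- A star in a bipartite graph with parts `U` and `W`: either a center in `U`
together with its set of leaves in `W`, or a center in `W` with leaves in `U`. -/
abbrev BStar (U W : Type*) := (U × Finset W) ⊕ (W × Finset U)

namespace BStar

variable {U W : Type*}

/-- The vertices in `U` of a star. -/
def uVerts : BStar U W → Finset U
  | .inl (c, _) => {c}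
  | .inr (_, L) => L

/-- The vertices in `W` of a star. -/
def wVerts : BStar U W → Finset W
  | .inl (_, L) => L
  | .inr (c, _) => {c}

/-- `X` is a valid `s`-star with respect to the edge relation `E`:
it has `s` leaves, all adjacent to the center. -/
def IsStar (E : U → W → Prop) (s : ℕ) : BStar U W → Prop
  | .inl (c, L) => L.card = s ∧ ∀ w ∈ L, E c w
  | .inr (c, L) => L.card = s ∧ ∀ u ∈ L, E u c

/-- The edges (branches) of a star, as pairs in `U × W`. -/
noncomputable def edges : BStar U W → Finset (U × W)
  | .inl (c, L) => L.image fun w => (c, w)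
  | .inr (c, L) => L.image fun u => (u, c)

/-- An `s`-star partition of the bipartite graph given by `E`: a set of valid
`s`-stars such that every vertex of `U` and of `W` belongs to exactly one star. -/
def IsPartition (E : U → W → Prop) (s : ℕ) (P : Finset (BStar U W)) : Prop :=
  (∀ X ∈ P, IsStar E s X) ∧
  (∀ u : U, ∃! X, X ∈ P ∧ u ∈ uVerts X) ∧
  (∀ w : W, ∃! X, X ∈ P ∧ w ∈ wVerts X)

variable [LinearOrder U] [LinearOrder W]

/-- Two edges `{u,w}` and `{u',w'}` cross if (`u ≺ u'` and `w' ≺ w`) or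
(`u' ≺ u` and `w ≺ w'`). -/
def Cross (e e' : U × W) : Prop :=
  (e.1 < e'.1 ∧ e'.2 < e.2) ∨ (e'.1 < e.1 ∧ e.2 < e'.2)

variable [Fintype U] [Fintype W]

/-- The edge-crossing number of two stars: the number of pairs of crossing
edges, one from each star. -/
noncomputable def crossNum (X Y : BStar U W) : ℕ :=
  ((edges X ×ˢ edges Y).filter fun p => Cross p.1 p.2).card

/-- The part of the scope of a star lying in `U`: all vertices of `U` between
the leftmost and the rightmost leaf (nonempty only for stars centered in `W`). -/
noncomputable def scopeU : BStar U W → Finset U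
  | .inl _ => ∅
  | .inr (_, L) => Finset.univ.filter fun u => ∃ a ∈ L, ∃ b ∈ L, a ≤ u ∧ u ≤ b

/-- The part of the scope of a star lying in `W`. -/
noncomputable def scopeW : BStar U W → Finset W
  | .inl (_, L) => Finset.univ.filter fun w => ∃ a ∈ L, ∃ b ∈ L, a ≤ w ∧ w ≤ b
  | .inr _ => ∅

/-- The width of a star: the cardinality of its scope. -/
noncomputable def width (X : BStar U W) : ℕ := (scopeU X).card + (scopeW X).card

/-- The center of `X` lies in the scope of `Y`. -/
def CenterInScope : BStar U W → BStar U W → Prop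
  | .inl (c, _), Y => c ∈ scopeU Y
  | .inr (c, _), Y => c ∈ scopeW Y

/-- Two stars are interleaving if the center of each lies in the scope of the
other. -/
def Interleaving (X Y : BStar U W) : Prop :=
  CenterInScope X Y ∧ CenterInScope Y X

/-- Two stars are non-crossing if their edge-crossing number is zero. -/
def NonCrossing (X Y : BStar U W) : Prop := crossNum X Y = 0

/-- The score of a partition: the pair (width, total edge-crossing number),
to be compared lexicographically.  (Summing over ordered pairs of distinct
stars counts every unordered pair twice, which does not affect comparisons.) -/
noncomputable def score (P : Finset (BStar U W)) : ℕ × ℕ :=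
  (∑ X ∈ P, width X, ∑ p ∈ P.offDiag, crossNum p.1 p.2)

end BStar

set_option linter.unusedSectionVars false

namespace BStar

section Basic

variable {U W : Type*} [LinearOrder U] [LinearOrder W] [Fintype U] [Fintype W]

/-- The standing hypotheses: the ordering is strong for `E`, and `P` is an `s`-star partition
(`s ≥ 1`) of minimum score. -/
def IsMin (E : U → W → Prop) (s : ℕ) (P : Finset (BStar U W)) : Prop :=
  (∀ u u' w w', E u w → E u' w' → u < u' → w' < w → E u w' ∧ E u' w) ∧ 1 ≤ s ∧
  IsPartition E s P ∧
  ∀ Q : Finset (BStar U W), IsPartition E s Q → ¬ toLex (score Q) < toLex (score P)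

/-- The interval of vertices spanned by a finite set of vertices. -/
noncomputable def hull {α : Type*} [LinearOrder α] [Fintype α] (L : Finset α) : Finset α :=
  Finset.univ.filter fun u => ∃ a ∈ L, ∃ b ∈ L, a ≤ u ∧ u ≤ b

lemma mem_hull {α : Type*} [LinearOrder α] [Fintype α] {L : Finset α} {z : α} :
    z ∈ hull L ↔ ∃ a ∈ L, ∃ b ∈ L, a ≤ z ∧ z ≤ b := by simp [hull]

lemma subset_hull {α : Type*} [LinearOrder α] [Fintype α] (L : Finset α) : L ⊆ hull L :=
  fun z hz => mem_hull.2 ⟨z, hz, z, hz, le_rfl, le_rfl⟩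

/-! ### Widths and crossing numbers -/

lemma width_inl (c : U) (L : Finset W) : width (Sum.inl (c, L) : BStar U W) = (hull L).card := by
  simp [width, scopeU, scopeW, hull]

lemma width_inr (c : W) (L : Finset U) : width (Sum.inr (c, L) : BStar U W) = (hull L).card := by
  simp [width, scopeU, scopeW, hull]

lemma cross_comm (e f : U × W) : Cross e f ↔ Cross f e := by
  unfold Cross; tauto

lemma crossNum_comm (X Y : BStar U W) : crossNum X Y = crossNum Y X := by
  unfold crossNum
  apply Finset.card_bij (fun p _ => (p.2, p.1))
  · rintro ⟨a, b⟩ h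
    simp only [Finset.mem_filter, Finset.mem_product] at h ⊢
    exact ⟨⟨h.1.2, h.1.1⟩, (cross_comm _ _).1 h.2⟩
  · rintro ⟨a, b⟩ _ ⟨c, d⟩ _ h
    simp only [Prod.mk.injEq] at h ⊢
    exact ⟨h.2, h.1⟩
  · rintro ⟨a, b⟩ h
    simp only [Finset.mem_filter, Finset.mem_product] at h
    exact ⟨(b, a), by simpa using ⟨⟨h.1.2, h.1.1⟩, (cross_comm _ _).1 h.2⟩, rfl⟩

lemma crossNum_eq_zero_iff {X Y : BStar U W} :
    crossNum X Y = 0 ↔ ∀ e ∈ edges X, ∀ f ∈ edges Y, ¬ Cross e f := by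
  unfold crossNum
  rw [Finset.card_eq_zero, Finset.filter_eq_empty_iff]
  constructor
  · intro h e he f hf
    exact h (x := (e, f)) (Finset.mem_product.2 ⟨he, hf⟩)
  · rintro h ⟨e, f⟩ hef
    exact h e (Finset.mem_product.1 hef).1 f (Finset.mem_product.1 hef).2

/-- The crossing number as a sum over the edges of the second star. -/
lemma crossNum_eq_sum (X Z : BStar U W) :
    crossNum X Z = ∑ e ∈ edges Z, ((edges X).filter fun x => Cross x e).card := by
  unfold crossNum
  rw [Finset.card_filter, Finset.sum_product_right]
  exact Finset.sum_congr rfl fun e _ => (Finset.card_filter _ _).symm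

lemma card_edges_inl (c : U) (L : Finset W) (e : U × W) :
    ((edges (Sum.inl (c, L) : BStar U W)).filter fun x => Cross x e).card
      = (L.filter fun x => Cross (c, x) e).card := by
  symm
  apply Finset.card_bij (fun x _ => (c, x))
  · intro x hx
    simp only [Finset.mem_filter] at hx ⊢
    exact ⟨by simpa [edges] using hx.1, hx.2⟩
  · intro a _ b _ h
    simpa using h
  · rintro y hy
    simp only [Finset.mem_filter, edges, Finset.mem_image] at hy
    obtain ⟨⟨x, hx, rfl⟩, h⟩ := hy
    exact ⟨x, by simpa using ⟨hx, h⟩, rfl⟩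

lemma card_edges_inr (c : W) (L : Finset U) (e : U × W) :
    ((edges (Sum.inr (c, L) : BStar U W)).filter fun x => Cross x e).card
      = (L.filter fun x => Cross (x, c) e).card := by
  symm
  apply Finset.card_bij (fun x _ => (x, c))
  · intro x hx
    simp only [Finset.mem_filter] at hx ⊢
    exact ⟨by simpa [edges] using hx.1, hx.2⟩
  · intro a _ b _ h
    simpa using h
  · rintro y hy
    simp only [Finset.mem_filter, edges, Finset.mem_image] at hy
    obtain ⟨⟨x, hx, rfl⟩, h⟩ := hy
    exact ⟨x, by simpa using ⟨hx, h⟩, rfl⟩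

lemma edges_verts {Z : BStar U W} {e : U × W} (he : e ∈ edges Z) :
    e.1 ∈ uVerts Z ∧ e.2 ∈ wVerts Z := by
  rcases Z with ⟨c, L⟩ | ⟨c, L⟩ <;> simp only [edges, Finset.mem_image] at he <;>
    obtain ⟨x, hx, rfl⟩ := he <;> simp [uVerts, wVerts, hx]

/-! ### Replacing two stars of a minimum partition -/

lemma eq_of_u {E : U → W → Prop} {s : ℕ} {P : Finset (BStar U W)} (h : IsPartition E s P)
    {X Y : BStar U W} (hX : X ∈ P) (hY : Y ∈ P) {u : U} (h1 : u ∈ uVerts X) (h2 : u ∈ uVerts Y) :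
    X = Y := (h.2.1 u).unique ⟨hX, h1⟩ ⟨hY, h2⟩

lemma eq_of_w {E : U → W → Prop} {s : ℕ} {P : Finset (BStar U W)} (h : IsPartition E s P)
    {X Y : BStar U W} (hX : X ∈ P) (hY : Y ∈ P) {u : W} (h1 : u ∈ wVerts X) (h2 : u ∈ wVerts Y) :
    X = Y := (h.2.2 u).unique ⟨hX, h1⟩ ⟨hY, h2⟩

lemma sum_offDiag_insert {α : Type*} [DecidableEq α] (f : α → α → ℕ)
    (hf : ∀ x y, f x y = f y x) (a : α) (t : Finset α) (ha : a ∉ t) :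
    ∑ p ∈ (insert a t).offDiag, f p.1 p.2
      = ∑ p ∈ t.offDiag, f p.1 p.2 + 2 * ∑ z ∈ t, f a z := by
  rw [Finset.offDiag_insert ha, Finset.sum_union, Finset.sum_union, Finset.sum_product,
    Finset.sum_product_right]
  · simp only [Finset.sum_singleton]
    rw [Finset.sum_congr rfl fun z _ => hf z a]
    ring
  · rw [Finset.disjoint_left]
    rintro ⟨x, y⟩ h1 h2
    simp only [Finset.mem_offDiag, Finset.mem_product, Finset.mem_singleton] at h1 h2
    exact ha (h2.1 ▸ h1.1)
  · rw [Finset.disjoint_left]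
    rintro ⟨x, y⟩ h1 h2
    simp only [Finset.mem_union, Finset.mem_offDiag, Finset.mem_product,
      Finset.mem_singleton] at h1 h2
    rcases h1 with h1 | h1
    · exact ha (h2.2 ▸ h1.2.1)
    · exact ha (h1.1 ▸ h2.1)

/-- The score of a set of stars with two distinguished members. -/
lemma score_insert (R : Finset (BStar U W)) (X Y : BStar U W) (hXY : X ≠ Y)
    (hX : X ∉ R) (hY : Y ∉ R) :
    score (insert X (insert Y R)) =
      (∑ Z ∈ R, width Z + (width X + width Y),
        ∑ p ∈ R.offDiag, crossNum p.1 p.2 + 2 * crossNum X Y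
          + 2 * ∑ Z ∈ R, (crossNum X Z + crossNum Y Z)) := by
  have h1 : X ∉ insert Y R := by simp [hXY, hX]
  unfold score
  rw [sum_offDiag_insert _ crossNum_comm _ _ h1, sum_offDiag_insert _ crossNum_comm _ _ hY,
    Finset.sum_insert h1, Finset.sum_insert hY, Finset.sum_insert hY, Finset.sum_add_distrib]
  ext <;> simp only <;> ring

lemma verts_nonempty (X : BStar U W) : (∃ u, u ∈ uVerts X) ∨ (∃ w, w ∈ wVerts X) := by
  rcases X with ⟨c, L⟩ | ⟨c, L⟩
  · exact Or.inl ⟨c, by simp [uVerts]⟩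
  · exact Or.inr ⟨c, by simp [wVerts]⟩

/-- In a partition of minimum score, two stars cannot be replaced by two stars on the same vertices
that lower the width, or lower their mutual crossing number without increasing the width or the
crossings with any third star. -/
lemma exchange {E : U → W → Prop} {s : ℕ} {P : Finset (BStar U W)} (h : IsMin E s P)
    {X Y X' Y' : BStar U W} (hX : X ∈ P) (hY : Y ∈ P) (hXY : X ≠ Y)
    (hX' : IsStar E s X') (hY' : IsStar E s Y')
    (hu : ∀ u, (u ∈ uVerts X' ∨ u ∈ uVerts Y') ↔ (u ∈ uVerts X ∨ u ∈ uVerts Y))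
    (hw : ∀ u, (u ∈ wVerts X' ∨ u ∈ wVerts Y') ↔ (u ∈ wVerts X ∨ u ∈ wVerts Y))
    (hud : ∀ u ∈ uVerts X', u ∉ uVerts Y') (hwd : ∀ u ∈ wVerts X', u ∉ wVerts Y')
    (hsc : width X' + width Y' < width X + width Y ∨
      (width X' + width Y' ≤ width X + width Y ∧ crossNum X' Y' < crossNum X Y ∧
        ∀ Z ∈ P, Z ≠ X → Z ≠ Y →
          crossNum X' Z + crossNum Y' Z ≤ crossNum X Z + crossNum Y Z)) : False := by
  obtain ⟨-, -, hP, hmin⟩ := h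
  set R := (P.erase X).erase Y with hR
  have memR : ∀ Z, Z ∈ R ↔ Z ∈ P ∧ Z ≠ X ∧ Z ≠ Y := by
    intro Z; simp only [hR, Finset.mem_erase]; tauto
  have hPe : P = insert X (insert Y R) := by
    rw [hR, Finset.insert_erase (by simp [hY, hXY.symm]), Finset.insert_erase hX]
  -- A vertex of one of the new stars lies in no third star.
  have noU : ∀ Z ∈ R, ∀ u ∈ uVerts Z, ¬ (u ∈ uVerts X' ∨ u ∈ uVerts Y') := by
    intro Z hZ u huZ hc
    obtain ⟨hZP, h1, h2⟩ := (memR Z).1 hZ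
    rcases (hu u).1 hc with hc | hc
    · exact h1 (eq_of_u hP hZP hX huZ hc)
    · exact h2 (eq_of_u hP hZP hY huZ hc)
  have noW : ∀ Z ∈ R, ∀ u ∈ wVerts Z, ¬ (u ∈ wVerts X' ∨ u ∈ wVerts Y') := by
    intro Z hZ u huZ hc
    obtain ⟨hZP, h1, h2⟩ := (memR Z).1 hZ
    rcases (hw u).1 hc with hc | hc
    · exact h1 (eq_of_w hP hZP hX huZ hc)
    · exact h2 (eq_of_w hP hZP hY huZ hc)
  have hX'R : X' ∉ R := by
    intro hc
    rcases verts_nonempty X' with ⟨u, h1⟩ | ⟨u, h1⟩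
    · exact noU _ hc u h1 (Or.inl h1)
    · exact noW _ hc u h1 (Or.inl h1)
  have hY'R : Y' ∉ R := by
    intro hc
    rcases verts_nonempty Y' with ⟨u, h1⟩ | ⟨u, h1⟩
    · exact noU _ hc u h1 (Or.inr h1)
    · exact noW _ hc u h1 (Or.inr h1)
  have hXY' : X' ≠ Y' := by
    rintro rfl
    rcases verts_nonempty X' with ⟨u, h1⟩ | ⟨u, h1⟩
    · exact hud u h1 h1
    · exact hwd u h1 h1
  have hQ : IsPartition E s (insert X' (insert Y' R)) := by
    refine ⟨?_, ?_, ?_⟩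
    · intro Z hZ
      simp only [Finset.mem_insert] at hZ
      rcases hZ with rfl | rfl | hZ
      · exact hX'
      · exact hY'
      · exact hP.1 Z ((memR Z).1 hZ).1
    · intro u
      obtain ⟨Z, ⟨hZ, huZ⟩, -⟩ := hP.2.1 u
      apply existsUnique_of_exists_of_unique
      · by_cases hc : u ∈ uVerts X ∨ u ∈ uVerts Y
        · rcases (hu u).2 hc with hc | hc
          · exact ⟨X', by simp, hc⟩
          · exact ⟨Y', by simp, hc⟩
        · refine ⟨Z, ?_, huZ⟩
          have : Z ∈ R := (memR Z).2 ⟨hZ, by rintro rfl; exact hc (Or.inl huZ),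
            by rintro rfl; exact hc (Or.inr huZ)⟩
          simp [this]
      · rintro A B ⟨hA, huA⟩ ⟨hB, huB⟩
        simp only [Finset.mem_insert] at hA hB
        rcases hA with rfl | rfl | hA <;> rcases hB with rfl | rfl | hB
        · rfl
        · exact absurd huB (hud u huA)
        · exact absurd (Or.inl huA) (noU B hB u huB)
        · exact absurd huA (hud u huB)
        · rfl
        · exact absurd (Or.inr huA) (noU B hB u huB)
        · exact absurd (Or.inl huB) (noU A hA u huA)
        · exact absurd (Or.inr huB) (noU A hA u huA)
        · exact eq_of_u hP ((memR A).1 hA).1 ((memR B).1 hB).1 huA huB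
    · intro u
      obtain ⟨Z, ⟨hZ, huZ⟩, -⟩ := hP.2.2 u
      apply existsUnique_of_exists_of_unique
      · by_cases hc : u ∈ wVerts X ∨ u ∈ wVerts Y
        · rcases (hw u).2 hc with hc | hc
          · exact ⟨X', by simp, hc⟩
          · exact ⟨Y', by simp, hc⟩
        · refine ⟨Z, ?_, huZ⟩
          have : Z ∈ R := (memR Z).2 ⟨hZ, by rintro rfl; exact hc (Or.inl huZ),
            by rintro rfl; exact hc (Or.inr huZ)⟩
          simp [this]
      · rintro A B ⟨hA, huA⟩ ⟨hB, huB⟩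
        simp only [Finset.mem_insert] at hA hB
        rcases hA with rfl | rfl | hA <;> rcases hB with rfl | rfl | hB
        · rfl
        · exact absurd huB (hwd u huA)
        · exact absurd (Or.inl huA) (noW B hB u huB)
        · exact absurd huA (hwd u huB)
        · rfl
        · exact absurd (Or.inr huA) (noW B hB u huB)
        · exact absurd (Or.inl huB) (noW A hA u huA)
        · exact absurd (Or.inr huB) (noW A hA u huA)
        · exact eq_of_w hP ((memR A).1 hA).1 ((memR B).1 hB).1 huA huB
  apply hmin _ hQ
  have hXR : X ∉ R := by simp [memR]
  have hYR : Y ∉ R := by simp [memR]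
  rw [hPe, score_insert R X' Y' hXY' hX'R hY'R, score_insert R X Y hXY hXR hYR,
    Prod.Lex.toLex_lt_toLex]
  simp only
  rcases hsc with hsc | ⟨h1, h2, h3⟩
  · left; omega
  · have : ∑ Z ∈ R, (crossNum X' Z + crossNum Y' Z) ≤ ∑ Z ∈ R, (crossNum X Z + crossNum Y Z) :=
      Finset.sum_le_sum fun Z hZ =>
        h3 Z ((memR Z).1 hZ).1 ((memR Z).1 hZ).2.1 ((memR Z).1 hZ).2.2
    rcases h1.lt_or_eq with h1 | h1
    · left; omega
    · right; constructor <;> omega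

/-! ### Stars with centers in the same part -/

/-- The `n` smallest elements of a finite set. -/
lemma exists_lower {α : Type*} [LinearOrder α] (T : Finset α) (n : ℕ) (hn : n ≤ T.card) :
    ∃ A ⊆ T, A.card = n ∧ ∀ a ∈ A, ∀ b ∈ T \ A, a < b := by
  induction n with
  | zero => exact ⟨∅, by simp, by simp, by simp⟩
  | succ n ih =>
    obtain ⟨A, hA, hc, hlt⟩ := ih (by omega)
    have hne : (T \ A).Nonempty := by
      rw [← Finset.card_pos, Finset.card_sdiff_of_subset hA]; omega
    have hm := Finset.min'_mem _ hne
    set b := (T \ A).min' hne with hb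
    have hm' := Finset.mem_sdiff.1 hm
    refine ⟨insert b A, ?_, by rw [Finset.card_insert_of_notMem hm'.2, hc], ?_⟩
    · intro x hx
      rcases Finset.mem_insert.1 hx with rfl | hx
      · exact hm'.1
      · exact hA hx
    · intro x hx y hy
      simp only [Finset.mem_sdiff, Finset.mem_insert, not_or] at hy
      rcases Finset.mem_insert.1 hx with rfl | hx
      · exact lt_of_le_of_ne (Finset.min'_le _ _ (Finset.mem_sdiff.2 ⟨hy.1, hy.2.2⟩))
          (Ne.symm hy.2.1)
      · exact hlt x hx y (Finset.mem_sdiff.2 ⟨hy.1, hy.2.2⟩)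

lemma exists_sdiff {α : Type*} {A B : Finset α} (h : A.card = B.card) {x : α}
    (hx : x ∈ A) (hxB : x ∉ B) : ∃ y ∈ B, y ∉ A := by
  by_contra! hc
  exact hxB ((Finset.eq_of_subset_of_card_le (s := B) (t := A) hc h.le) ▸ hx)

/-- Sorting two finite sets of equal size into a lower and an upper half does not increase the
total size of their hulls. -/
lemma hull_sort {α : Type*} [LinearOrder α] [Fintype α] {A B A' B' : Finset α}
    (hAB : A.card = B.card) (hA' : A'.card = A.card)
    (hU : ∀ x, (x ∈ A' ∨ x ∈ B') ↔ (x ∈ A ∨ x ∈ B))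
    (hd : ∀ x ∈ A, x ∉ B) (hlt : ∀ a ∈ A', ∀ b ∈ B', a < b) :
    (hull A').card + (hull B').card ≤ (hull A).card + (hull B).card := by
  -- A point separating the old sets separates the new ones, so it lies in neither new hull.
  have key : ∀ C D : Finset α, C.card = A'.card →
      (∀ x, (x ∈ A' ∨ x ∈ B') ↔ (x ∈ C ∨ x ∈ D)) → (∀ x ∈ C, x ∉ D) → ∀ z,
      (∀ x ∈ C, x < z) → (∀ x ∈ D, z < x) → z ∉ hull A' ∧ z ∉ hull B' := by
    intro C D hC hCD hdis z h1 h2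
    constructor
    · intro hz
      obtain ⟨-, -, b, hb, -, hzb⟩ := mem_hull.1 hz
      have hbC : b ∉ C := fun hc => absurd (h1 b hc) (not_lt.2 hzb)
      obtain ⟨y, hy, hyA⟩ := exists_sdiff hC.symm hb hbC
      have hyB : y ∈ B' := ((hCD y).2 (Or.inl hy)).resolve_left hyA
      exact absurd (hlt b hb y hyB) (not_lt.2 ((h1 y hy).le.trans hzb))
    · intro hz
      obtain ⟨a, ha, -, -, haz, -⟩ := mem_hull.1 hz
      have haD : a ∉ D := fun hc => absurd (h2 a hc) (not_lt.2 haz)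
      have haC : a ∈ C := ((hCD a).1 (Or.inr ha)).resolve_right haD
      have haA : a ∉ A' := fun hc => lt_irrefl _ (hlt a hc a ha)
      obtain ⟨y, hy, hyC⟩ := exists_sdiff hC haC haA
      have hyD : y ∈ D := ((hCD y).1 (Or.inl hy)).resolve_left hyC
      exact absurd (hlt y hy a ha) (not_lt.2 (haz.trans (h2 y hyD).le))
  -- A point outside a hull has the whole set on one side.
  have side : ∀ C : Finset α, ∀ z, z ∉ hull C → (∀ x ∈ C, x < z) ∨ (∀ x ∈ C, z < x) := by
    intro C z hz
    by_contra! hc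
    obtain ⟨⟨x, hx, hzx⟩, y, hy, hyz⟩ := hc
    exact hz (mem_hull.2 ⟨y, hy, x, hx, hyz, hzx⟩)
  have hdisj : Disjoint (hull A') (hull B') := by
    rw [Finset.disjoint_left]
    intro z h1 h2
    obtain ⟨-, -, b, hb, -, hzb⟩ := mem_hull.1 h1
    obtain ⟨a, ha, -, -, haz, -⟩ := mem_hull.1 h2
    exact absurd (hlt b hb a ha) (not_lt.2 (haz.trans hzb))
  rw [← Finset.card_union_of_disjoint hdisj]
  refine (Finset.card_le_card ?_).trans (Finset.card_union_le _ _)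
  intro z hz
  rw [Finset.mem_union] at hz ⊢
  by_contra hc
  push Not at hc
  have hU' : ∀ x, (x ∈ A' ∨ x ∈ B') ↔ (x ∈ B ∨ x ∈ A) := fun x => (hU x).trans or_comm
  rcases side A z hc.1 with h1 | h1 <;> rcases side B z hc.2 with h2 | h2
  · have hall : ∀ x, (x ∈ A' ∨ x ∈ B') → x < z := fun x hx =>
      ((hU x).1 hx).elim (h1 x) (h2 x)
    rcases hz with hz | hz <;> obtain ⟨-, -, b, hb, -, hzb⟩ := mem_hull.1 hz
    · exact absurd (hall b (Or.inl hb)) (not_lt.2 hzb)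
    · exact absurd (hall b (Or.inr hb)) (not_lt.2 hzb)
  · obtain ⟨k1, k2⟩ := key A B hA'.symm hU hd z h1 h2
    exact hz.elim k1 k2
  · obtain ⟨k1, k2⟩ := key B A (by omega) hU' (fun x hx hx' => hd x hx' hx) z h2 h1
    exact hz.elim k1 k2
  · have hall : ∀ x, (x ∈ A' ∨ x ∈ B') → z < x := fun x hx =>
      ((hU x).1 hx).elim (h1 x) (h2 x)
    rcases hz with hz | hz <;> obtain ⟨b, hb, -, -, hzb, -⟩ := mem_hull.1 hz
    · exact absurd (hall b (Or.inl hb)) (not_lt.2 hzb)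
    · exact absurd (hall b (Or.inr hb)) (not_lt.2 hzb)

lemma card_filter_union {α : Type*} {A B A' B' : Finset α}
    (hU : ∀ x, (x ∈ A' ∨ x ∈ B') ↔ (x ∈ A ∨ x ∈ B))
    (hd : ∀ x ∈ A, x ∉ B) (hd' : ∀ x ∈ A', x ∉ B') (p : α → Prop) :
    (A'.filter p).card + (B'.filter p).card = (A.filter p).card + (B.filter p).card := by
  rw [← Finset.card_union_of_disjoint, ← Finset.card_union_of_disjoint, ← Finset.filter_union,
    ← Finset.filter_union]
  · congr 2
    ext x
    simpa using hU x
  · rw [Finset.disjoint_left]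
    intro x h1 h2
    exact hd x (Finset.mem_filter.1 h1).1 (Finset.mem_filter.1 h2).1
  · rw [Finset.disjoint_left]
    intro x h1 h2
    exact hd' x (Finset.mem_filter.1 h1).1 (Finset.mem_filter.1 h2).1

/-- Two stars of a minimum partition centered in `U` do not cross: otherwise redistributing their
leaves so that the left center gets the leftmost ones would lower the score. -/
lemma same_inl {E : U → W → Prop} {s : ℕ} {P : Finset (BStar U W)} (h : IsMin E s P)
    {c d : U} {A B : Finset W} (hX : Sum.inl (c, A) ∈ P) (hY : Sum.inl (d, B) ∈ P) (hcd : c < d) :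
    ∀ a ∈ A, ∀ b ∈ B, a < b := by
  have hP := h.2.2.1
  have hne : (Sum.inl (c, A) : BStar U W) ≠ Sum.inl (d, B) := by
    intro hc
    simp only [Sum.inl.injEq, Prod.mk.injEq] at hc
    exact hcd.ne hc.1
  have hd : ∀ x ∈ A, x ∉ B := fun x h1 h2 =>
    hne (eq_of_w hP hX hY (u := x) (by simpa [wVerts] using h1) (by simpa [wVerts] using h2))
  intro a₀ ha₀ b₀ hb₀
  by_contra hab
  have hba : b₀ < a₀ := lt_of_le_of_ne (not_lt.1 hab) (by rintro rfl; exact hd _ ha₀ hb₀)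
  obtain ⟨hAs, hAE⟩ := hP.1 _ hX
  obtain ⟨hBs, hBE⟩ := hP.1 _ hY
  have hdisj : Disjoint A B := Finset.disjoint_left.2 hd
  have hT : (A ∪ B).card = s + s := by rw [Finset.card_union_of_disjoint hdisj, hAs, hBs]
  obtain ⟨A', hA'T, hA's, hlt⟩ := exists_lower (A ∪ B) s (by omega)
  set B' := (A ∪ B) \ A' with hB'
  have hB's : B'.card = s := by rw [hB', Finset.card_sdiff_of_subset hA'T]; omega
  have hd' : ∀ x ∈ A', x ∉ B' := fun x h1 h2 => (Finset.mem_sdiff.1 h2).2 h1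
  have hU : ∀ x, (x ∈ A' ∨ x ∈ B') ↔ (x ∈ A ∨ x ∈ B) := by
    intro x
    rw [← Finset.mem_union (s := A)]
    constructor
    · rintro (hx | hx)
      · exact hA'T hx
      · exact (Finset.mem_sdiff.1 hx).1
    · intro hx
      by_cases hx' : x ∈ A'
      · exact Or.inl hx'
      · exact Or.inr (Finset.mem_sdiff.2 ⟨hx, hx'⟩)
  refine exchange h hX hY hne (X' := Sum.inl (c, A')) (Y' := Sum.inl (d, B')) ?_ ?_ ?_ ?_ ?_ ?_ ?_
  · refine ⟨hA's, fun x hx => ?_⟩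
    by_cases hxA : x ∈ A
    · exact hAE x hxA
    · have hxB := ((hU x).1 (Or.inl hx)).resolve_left hxA
      obtain ⟨y, hy, hyA'⟩ := exists_sdiff (hA's.trans hAs.symm) hx hxA
      have hyB' := ((hU y).2 (Or.inl hy)).resolve_left hyA'
      exact (h.1 c d y x (hAE y hy) (hBE x hxB) hcd (hlt x hx y hyB')).1
  · refine ⟨hB's, fun x hx => ?_⟩
    by_cases hxB : x ∈ B
    · exact hBE x hxB
    · have hxA := ((hU x).1 (Or.inr hx)).resolve_right hxB
      obtain ⟨y, hy, hyB'⟩ := exists_sdiff (hB's.trans hBs.symm) hx hxB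
      have hyA' := ((hU y).2 (Or.inr hy)).resolve_right hyB'
      exact (h.1 c d x y (hAE x hxA) (hBE y hy) hcd (hlt y hyA' x hx)).2
  · intro u; simp [uVerts]
  · intro u; simpa [wVerts] using hU u
  · intro u hu; simp only [uVerts, Finset.mem_singleton] at hu ⊢; rw [hu]; exact hcd.ne
  · intro u hu; exact hd' u hu
  · right
    refine ⟨?_, ?_, ?_⟩
    · simp only [width_inl]
      exact hull_sort (hAs.trans hBs.symm) (hA's.trans hAs.symm) hU hd hlt
    · have h0 : crossNum (Sum.inl (c, A') : BStar U W) (Sum.inl (d, B')) = 0 := by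
        rw [crossNum_eq_zero_iff]
        intro e he f hf
        simp only [edges, Finset.mem_image] at he hf
        obtain ⟨x, hx, rfl⟩ := he
        obtain ⟨y, hy, rfl⟩ := hf
        have := hlt x hx y hy
        simp only [Cross, not_or, not_and]
        exact ⟨fun _ => this.not_gt, fun h => absurd h hcd.not_gt⟩
      rw [h0, Nat.pos_iff_ne_zero, ne_eq, crossNum_eq_zero_iff]
      intro hc
      refine hc (c, a₀) ?_ (d, b₀) ?_ (Or.inl ⟨hcd, hba⟩)
      · simpa [edges] using ha₀
      · simpa [edges] using hb₀
    · intro Z hZ hZX hZY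
      simp only [crossNum_eq_sum _ Z]
      rw [← Finset.sum_add_distrib, ← Finset.sum_add_distrib]
      apply Finset.sum_le_sum
      rintro ⟨u, w⟩ he
      obtain ⟨heu, hew⟩ := edges_verts he
      simp only [card_edges_inl]
      have huc : u ≠ c := by
        rintro rfl; exact hZX (eq_of_u hP hZ hX heu (by simp [uVerts]))
      have hud : u ≠ d := by
        rintro rfl; exact hZY (eq_of_u hP hZ hY heu (by simp [uVerts]))
      have hwA : w ∉ A := fun hc => hZX (eq_of_w hP hZ hX hew hc)
      have hwB : w ∉ B := fun hc => hZY (eq_of_w hP hZ hY hew hc)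
      -- If `u` is not between the centers, the crossings only depend on the union of the leaves.
      have outside : (∀ x, Cross (c, x) (u, w) ↔ Cross (d, x) (u, w)) →
          (A'.filter fun x => Cross (c, x) (u, w)).card + (B'.filter fun x => Cross (d, x) (u, w)).card
          ≤ (A.filter fun x => Cross (c, x) (u, w)).card
            + (B.filter fun x => Cross (d, x) (u, w)).card := by
        intro hiff
        simp only [hiff]
        exact (card_filter_union hU hd hd' _).le
      rcases lt_or_gt_of_ne huc with h1 | h1
      · apply outside
        intro x
        have h2 : u < d := h1.trans hcd
        simp [Cross, h1, h2, h1.not_gt, h2.not_gt]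
      rcases lt_or_gt_of_ne hud with h2 | h2
      · have e1 : ∀ x, Cross (c, x) (u, w) ↔ w < x := by
          intro x; simp [Cross, h1, h1.not_gt]
        have e2 : ∀ x, Cross (d, x) (u, w) ↔ x < w := by
          intro x; simp [Cross, h2, h2.not_gt]
        -- An edge at `u` between the centers crosses the leaves of `c` right of `w` and those of `d`
        -- left of `w`; after sorting, one of the two sets of crossings is empty.
        have t1 := card_filter_union hU hd hd' (fun x => Cross (c, x) (u, w))
        have t2 := card_filter_union hU hd hd' (fun x => Cross (d, x) (u, w))
        by_cases hex : ∃ x ∈ A', w < x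
        · obtain ⟨x, hx, hwx⟩ := hex
          have hall : ∀ y ∈ B', w < y := fun y hy => hwx.trans (hlt x hx y hy)
          rw [Finset.filter_true_of_mem (s := B') fun y hy => (e1 y).2 (hall y hy)] at t1
          rw [Finset.filter_false_of_mem (s := B') fun y hy hc => (hall y hy).not_gt ((e2 y).1 hc)]
          have := Finset.card_filter_le B (fun x => Cross (c, x) (u, w))
          simp only [Finset.card_empty]
          omega
        · push Not at hex
          have hall : ∀ y ∈ A', y < w := fun y hy => lt_of_le_of_ne (hex y hy) (by
            rintro rfl
            exact ((hU y).1 (Or.inl hy)).elim hwA hwB)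
          rw [Finset.filter_true_of_mem (s := A') fun y hy => (e2 y).2 (hall y hy)] at t2
          rw [Finset.filter_false_of_mem (s := A') fun y hy hc => (hall y hy).not_gt ((e1 y).1 hc)]
          have := Finset.card_filter_le A (fun x => Cross (d, x) (u, w))
          simp only [Finset.card_empty]
          omega
      · apply outside
        intro x
        simp [Cross, h1, h2, h1.not_gt, h2.not_gt]

/-! ### Exchanging a center with a leaf -/

/-- Let `L` lie right of `d`, and let `m > c` be a leaf of the star centered at `d`. By the strong
ordering, `m` may take over the leaves `L` while `c` becomes a leaf of `d` in place of `m`. Minimality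
forbids that this lowers the width, or that (for `m` the last leaf) it increases neither the
width nor the crossings with third stars, since it uncrosses the pair. -/
lemma exchange_center {E : U → W → Prop} {s : ℕ} {P : Finset (BStar U W)} (h : IsMin E s P)
    {c : U} {L : Finset W} {d : W} {M : Finset U}
    (hX : Sum.inl (c, L) ∈ P) (hY : Sum.inr (d, M) ∈ P) (hL : ∀ l ∈ L, d < l)
    {m : U} (hm : m ∈ M) (hcm : c < m)
    (hsc : (hull (insert c (M.erase m))).card < (hull M).card ∨
      ((hull (insert c (M.erase m))).card ≤ (hull M).card ∧ (∀ x ∈ M, x ≤ m) ∧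
        ∀ Z ∈ P, Z ≠ Sum.inl (c, L) → Z ≠ Sum.inr (d, M) →
          crossNum (Sum.inl (m, L)) Z + crossNum (Sum.inr (d, insert c (M.erase m))) Z
            ≤ crossNum (Sum.inl (c, L)) Z + crossNum (Sum.inr (d, M)) Z)) : False := by
  have hP := h.2.2.1
  have hne : (Sum.inl (c, L) : BStar U W) ≠ Sum.inr (d, M) := by simp
  have hcM : c ∉ M := fun hc => hne (eq_of_u hP hX hY (u := c) (by simp [uVerts]) hc)
  obtain ⟨hLs, hLE⟩ := hP.1 _ hX
  obtain ⟨hMs, hME⟩ := hP.1 _ hY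
  have hLne : L.Nonempty := by rw [← Finset.card_pos, hLs]; exact h.2.1
  obtain ⟨l₀, hl₀⟩ := hLne
  have swap := fun l hl => h.1 c m l d (hLE l hl) (hME m hm) hcm (hL l hl)
  have hcard : (insert c (M.erase m)).card = s := by
    rw [Finset.card_insert_of_notMem (by simp [hcM]), Finset.card_erase_of_mem hm, hMs]
    have := h.2.1
    omega
  refine exchange h hX hY hne (X' := Sum.inl (m, L))
    (Y' := Sum.inr (d, insert c (M.erase m))) ?_ ?_ ?_ ?_ ?_ ?_ ?_
  · exact ⟨hLs, fun l hl => (swap l hl).2⟩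
  · refine ⟨hcard, fun x hx => ?_⟩
    rcases Finset.mem_insert.1 hx with rfl | hx
    · exact (swap l₀ hl₀).1
    · exact hME x (Finset.mem_of_mem_erase hx)
  · intro u
    simp only [uVerts, Finset.mem_singleton, Finset.mem_insert, Finset.mem_erase]
    by_cases hu : u = m
    · subst hu; simp [hm]
    · simp [hu]
  · intro u; simp [wVerts]
  · intro u hu
    simp only [uVerts, Finset.mem_singleton] at hu
    subst hu
    simp [uVerts, hcm.ne']
  · intro u hu
    simp only [wVerts, Finset.mem_singleton] at hu ⊢
    exact (hL u hu).ne'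
  · simp only [width_inl, width_inr]
    rcases hsc with hsc | ⟨h1, h2, h3⟩
    · left; omega
    · right
      refine ⟨by omega, ?_, h3⟩
      have h0 : crossNum (Sum.inl (m, L) : BStar U W) (Sum.inr (d, insert c (M.erase m))) = 0 := by
        rw [crossNum_eq_zero_iff]
        intro e he f hf
        simp only [edges, Finset.mem_image] at he hf
        obtain ⟨x, hx, rfl⟩ := he
        obtain ⟨y, hy, rfl⟩ := hf
        have hym : y ≤ m := by
          rcases Finset.mem_insert.1 hy with rfl | hy
          · exact hcm.le
          · exact h2 y (Finset.mem_of_mem_erase hy)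
        simp only [Cross, not_or, not_and]
        exact ⟨fun h => absurd h hym.not_gt, fun _ => (hL x hx).not_gt⟩
      rw [h0, Nat.pos_iff_ne_zero, ne_eq, crossNum_eq_zero_iff]
      intro hc
      refine hc (c, l₀) ?_ (m, d) ?_ (Or.inl ⟨hcm, hL l₀ hl₀⟩)
      · simpa [edges] using hl₀
      · simpa [edges] using hm

/-- If all leaves of the `U`-centered star lie right of `d`, its center `c` cannot lie between two
leaves of the star centered at `d`: exchanging centers would shrink the width. -/
lemma no_center_in_scope {E : U → W → Prop} {s : ℕ} {P : Finset (BStar U W)} (h : IsMin E s P)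
    {c : U} {L : Finset W} {d : W} {M : Finset U}
    (hX : Sum.inl (c, L) ∈ P) (hY : Sum.inr (d, M) ∈ P) (hL : ∀ l ∈ L, d < l)
    {m m' : U} (hm : m ∈ M) (hcm : c < m) (hm' : m' ∈ M) (hm'c : m' < c) : False := by
  have hne : M.Nonempty := ⟨m, hm⟩
  have hmax := Finset.max'_mem M hne
  have hle : ∀ x ∈ M, x ≤ M.max' hne := fun x hx => Finset.le_max' M x hx
  set k := M.max' hne with hk
  have hck : c < k := hcm.trans_le (hle m hm)
  have bd : ∀ x ∈ insert c (M.erase k), x < k ∧ ∃ a ∈ M, a ≤ x := by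
    intro x hx
    rcases Finset.mem_insert.1 hx with rfl | hx
    · exact ⟨hck, m', hm', hm'c.le⟩
    · rw [Finset.mem_erase] at hx
      exact ⟨lt_of_le_of_ne (hle x hx.2) hx.1, x, hx.2, le_rfl⟩
  refine exchange_center h hX hY hL hmax hck (Or.inl (Finset.card_lt_card ?_))
  rw [Finset.ssubset_iff_of_subset]
  · refine ⟨k, subset_hull M hmax, ?_⟩
    intro hc
    obtain ⟨-, -, b, hb, -, hkb⟩ := mem_hull.1 hc
    exact absurd (bd b hb).1 hkb.not_gt
  · intro z hz
    obtain ⟨a, ha, b, hb, haz, hzb⟩ := mem_hull.1 hz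
    obtain ⟨a', ha', haa⟩ := (bd a ha).2
    exact mem_hull.2 ⟨a', ha', k, hmax, haa.trans haz, hzb.trans (bd b hb).1.le⟩

/-! ### Symmetries -/

section Swap

/-- Exchanging the roles of the two parts of the bipartite graph. -/
abbrev swapP (P : Finset (BStar U W)) : Finset (BStar W U) :=
  P.map (Equiv.sumComm _ _).toEmbedding

lemma mem_swapP {P : Finset (BStar U W)} {X : BStar W U} : X ∈ swapP P ↔ Sum.swap X ∈ P := by
  simp only [swapP, Finset.mem_map_equiv]
  rfl

lemma uVerts_swap (X : BStar U W) : uVerts (Sum.swap X : BStar W U) = wVerts X := by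
  rcases X with ⟨c, L⟩ | ⟨c, L⟩ <;> rfl

lemma wVerts_swap (X : BStar U W) : wVerts (Sum.swap X : BStar W U) = uVerts X := by
  rcases X with ⟨c, L⟩ | ⟨c, L⟩ <;> rfl

lemma width_swap (X : BStar U W) : width (Sum.swap X : BStar W U) = width X := by
  rcases X with ⟨c, L⟩ | ⟨c, L⟩
  · exact (width_inr c L).trans (width_inl c L).symm
  · exact (width_inl c L).trans (width_inr c L).symm

lemma mem_edges_swap (X : BStar U W) (e : U × W) :
    e.swap ∈ edges (Sum.swap X : BStar W U) ↔ e ∈ edges X := by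
  obtain ⟨u, w⟩ := e
  rcases X with ⟨c, L⟩ | ⟨c, L⟩ <;> simp [edges]

lemma crossNum_swap (X Y : BStar U W) :
    crossNum (Sum.swap X : BStar W U) (Sum.swap Y) = crossNum X Y := by
  symm
  unfold crossNum
  apply Finset.card_bij (fun p _ => (p.1.swap, p.2.swap))
  · rintro ⟨a, b⟩ h
    simp only [Finset.mem_filter, Finset.mem_product, mem_edges_swap] at h ⊢
    refine ⟨h.1, ?_⟩
    have := h.2
    simp only [Cross, Prod.fst_swap, Prod.snd_swap] at this ⊢
    tauto
  · rintro ⟨a, b⟩ _ ⟨c, d⟩ _ h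
    simpa using h
  · rintro ⟨a, b⟩ h
    refine ⟨(a.swap, b.swap), ?_, by simp⟩
    simp only [Finset.mem_filter, Finset.mem_product] at h ⊢
    refine ⟨⟨(mem_edges_swap X a.swap).1 (by simpa using h.1.1),
      (mem_edges_swap Y b.swap).1 (by simpa using h.1.2)⟩, ?_⟩
    have := h.2
    simp only [Cross, Prod.fst_swap, Prod.snd_swap] at this ⊢
    tauto

lemma score_swapP (P : Finset (BStar U W)) : score (swapP P) = score P := by
  unfold score
  ext
  · simp only [swapP, Finset.sum_map]
    exact Finset.sum_congr rfl fun X _ => width_swap X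
  · simp only
    symm
    apply Finset.sum_bij (fun p _ => (Sum.swap p.1, Sum.swap p.2))
    · rintro ⟨X, Y⟩ h
      simp only [Finset.mem_offDiag, mem_swapP, Sum.swap_swap] at h ⊢
      exact ⟨h.1, h.2.1, fun hc => h.2.2 (by simpa using congrArg Sum.swap hc)⟩
    · rintro ⟨X, Y⟩ _ ⟨X', Y'⟩ _ h
      simp only [Prod.mk.injEq] at h ⊢
      exact ⟨by simpa using congrArg Sum.swap h.1, by simpa using congrArg Sum.swap h.2⟩
    · rintro ⟨X, Y⟩ h
      simp only [Finset.mem_offDiag, mem_swapP] at h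
      refine ⟨(Sum.swap X, Sum.swap Y), ?_, by simp⟩
      simp only [Finset.mem_offDiag]
      exact ⟨h.1, h.2.1, fun hc => h.2.2 (by simpa using congrArg Sum.swap hc)⟩
    · rintro ⟨X, Y⟩ _
      exact (crossNum_swap X Y).symm

lemma isPartition_swapP {E : U → W → Prop} {s : ℕ} {P : Finset (BStar U W)}
    (h : IsPartition E s P) : IsPartition (fun w u => E u w) s (swapP P) := by
  refine ⟨?_, ?_, ?_⟩
  · intro X hX
    have := h.1 _ (mem_swapP.1 hX)
    rcases X with ⟨c, L⟩ | ⟨c, L⟩ <;> exact this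
  · intro w
    obtain ⟨X, ⟨hX, hw⟩, hu⟩ := h.2.2 w
    refine ⟨Sum.swap X, ⟨by simpa [mem_swapP] using hX, by rwa [uVerts_swap]⟩, ?_⟩
    rintro Y ⟨hY, hwY⟩
    rw [← hu (Sum.swap Y) ⟨mem_swapP.1 hY, by rwa [wVerts_swap]⟩, Sum.swap_swap]
  · intro w
    obtain ⟨X, ⟨hX, hw⟩, hu⟩ := h.2.1 w
    refine ⟨Sum.swap X, ⟨by simpa [mem_swapP] using hX, by rwa [wVerts_swap]⟩, ?_⟩
    rintro Y ⟨hY, hwY⟩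
    rw [← hu (Sum.swap Y) ⟨mem_swapP.1 hY, by rwa [uVerts_swap]⟩, Sum.swap_swap]

end Swap

end Basic

section Duality

variable {U W : Type*} [LinearOrder U] [LinearOrder W] [Fintype U] [Fintype W]

/-- Minimality is invariant under exchanging the two parts. -/
lemma IsMin.swap {E : U → W → Prop} {s : ℕ} {P : Finset (BStar U W)} (h : IsMin E s P) :
    IsMin (fun w u => E u w) s (swapP P) := by
  refine ⟨?_, h.2.1, isPartition_swapP h.2.2.1, ?_⟩
  · intro w w' u u' h1 h2 h3 h4
    exact h.1 u' u w' w h2 h1 h4 h3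
  · intro Q hQ
    rw [score_swapP, ← score_swapP Q]
    exact h.2.2.2 _ (isPartition_swapP hQ)

lemma crossNum_dual (X Y : BStar U W) :
    crossNum (U := Uᵒᵈ) (W := Wᵒᵈ) X Y = crossNum X Y := by
  unfold crossNum
  congr 1
  ext ⟨a, b⟩
  refine Iff.trans Finset.mem_filter (Iff.trans ?_ Finset.mem_filter.symm)
  exact and_congr_right fun _ => or_comm

lemma hull_dual (L : Finset U) : (hull (α := Uᵒᵈ) L).card = (hull L).card := by
  congr 1
  ext z
  refine (mem_hull (α := Uᵒᵈ) (L := L) (z := z)).trans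
    (Iff.trans ?_ (mem_hull (α := U) (L := L) (z := z)).symm)
  constructor
  · rintro ⟨a, ha, b, hb, h1, h2⟩
    exact ⟨b, hb, a, ha, h2, h1⟩
  · rintro ⟨a, ha, b, hb, h1, h2⟩
    exact ⟨b, hb, a, ha, h2, h1⟩

lemma width_dual (X : BStar U W) : width (U := Uᵒᵈ) (W := Wᵒᵈ) X = width X := by
  rcases X with ⟨c, L⟩ | ⟨c, L⟩
  · exact (width_inl (U := Uᵒᵈ) (W := Wᵒᵈ) c L).trans
      ((hull_dual (U := W) L).trans (width_inl c L).symm)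
  · exact (width_inr (U := Uᵒᵈ) (W := Wᵒᵈ) c L).trans
      ((hull_dual (U := U) L).trans (width_inr c L).symm)

lemma score_dual (P : Finset (BStar U W)) : score (U := Uᵒᵈ) (W := Wᵒᵈ) P = score P := by
  unfold score
  ext
  · exact Finset.sum_congr rfl fun X _ => width_dual (U := U) (W := W) X
  · simp only
    have : (Finset.offDiag (α := BStar Uᵒᵈ Wᵒᵈ) P) = Finset.offDiag (α := BStar U W) P := by
      ext p
      exact (Finset.mem_offDiag (α := BStar Uᵒᵈ Wᵒᵈ)).trans Finset.mem_offDiag.symm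
    rw [this]
    exact Finset.sum_congr rfl fun p _ => crossNum_dual (U := U) (W := W) p.1 p.2

/-- Minimality is invariant under reversing both orders. -/
lemma IsMin.dual {E : U → W → Prop} {s : ℕ} {P : Finset (BStar U W)} (h : IsMin E s P) :
    IsMin (U := Uᵒᵈ) (W := Wᵒᵈ) E s P := by
  refine ⟨?_, h.2.1, h.2.2.1, ?_⟩
  · intro u u' w w' h1 h2 h3 h4
    exact (h.1 u' u w' w h2 h1 h3 h4).symm
  · intro Q hQ
    rw [score_dual (U := U) (W := W) P, score_dual (U := U) (W := W) Q]
    exact h.2.2.2 Q hQ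

/-! ### Crossing stars are interleaving -/

/-- The mirror image of `same_inl` for stars centered in `W`. -/
lemma same_inr {E : U → W → Prop} {s : ℕ} {P : Finset (BStar U W)} (h : IsMin E s P)
    {c d : W} {A B : Finset U} (hX : Sum.inr (c, A) ∈ P) (hY : Sum.inr (d, B) ∈ P) (hcd : c < d) :
    ∀ a ∈ A, ∀ b ∈ B, a < b :=
  same_inl h.swap (mem_swapP.2 hX) (mem_swapP.2 hY) hcd

/-- A `U`-centered star and a `W`-centered star cannot both have their leaves right of the other's
center. Among such pairs, take one with the fewest vertices between `c` and the leaves `M`. Then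
all vertices from `c` to the end of `M` belong to `M`, so exchanging `c` with the last leaf
preserves the widths and all crossings with third stars while uncrossing the pair. -/
lemma no_both_right {E : U → W → Prop} {s : ℕ} {P : Finset (BStar U W)} (h : IsMin E s P) (n : ℕ) :
    ∀ {c : U} {L : Finset W} {d : W} {M : Finset U},
    Sum.inl (c, L) ∈ P → Sum.inr (d, M) ∈ P → (∀ l ∈ L, d < l) → (∀ m ∈ M, c < m) →
    (Finset.univ.filter fun v => c < v ∧ ∀ m ∈ M, v < m).card = n → False := by
  induction n using Nat.strong_induction_on with
  | _ n ih =>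
  intro c L d M hX hY hL hM hn
  have hP := h.2.2.1
  have nonempty_inl : ∀ {c : U} {L : Finset W}, Sum.inl (c, L) ∈ P → L.Nonempty := by
    intro c L hc
    rw [← Finset.card_pos, (hP.1 _ hc).1]; exact h.2.1
  have nonempty_inr : ∀ {c : W} {L : Finset U}, Sum.inr (c, L) ∈ P → L.Nonempty := by
    intro c L hc
    rw [← Finset.card_pos, (hP.1 _ hc).1]; exact h.2.1
  have hMne := nonempty_inr hY
  have hmax := Finset.max'_mem M hMne
  have hle : ∀ x ∈ M, x ≤ M.max' hMne := fun x hx => Finset.le_max' M x hx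
  set k := M.max' hMne with hk
  have hck : c < k := hM k hmax
  have fill : ∀ v, c < v → v ≤ k → v ∈ M := by
    intro v hcv hvk
    by_contra hvM
    obtain ⟨Z, ⟨hZ, hvZ⟩, -⟩ := hP.2.1 v
    rcases Z with ⟨u, N⟩ | ⟨w, N⟩
    · -- `v` is a center, whose leaves lie right of those of `c`.
      simp only [uVerts, Finset.mem_singleton] at hvZ
      subst hvZ
      have hLN := same_inl h hX hZ hcv
      obtain ⟨l₀, hl₀⟩ := nonempty_inl hX
      have hN : ∀ x ∈ N, d < x := fun x hx => (hL l₀ hl₀).trans (hLN l₀ hl₀ x hx)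
      by_cases hall : ∀ m ∈ M, v < m
      · refine ih _ ?_ hZ hY hN hall rfl
        rw [← hn]
        apply Finset.card_lt_card
        rw [Finset.ssubset_iff_of_subset]
        · exact ⟨v, by simpa using ⟨hcv, hall⟩, by simp⟩
        · intro x hx
          simp only [Finset.mem_filter, Finset.mem_univ, true_and] at hx ⊢
          exact ⟨hcv.trans hx.1, hx.2⟩
      · push Not at hall
        obtain ⟨m, hm, hmv⟩ := hall
        have hmv' : m < v := lt_of_le_of_ne hmv (by rintro rfl; exact hvM hm)
        have hvk' : v < k := lt_of_le_of_ne hvk (by rintro rfl; exact hvM hmax)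
        exact no_center_in_scope h hZ hY hN hmax hvk' hm hmv'
    · -- `v` is a leaf of a star centered at `w`.
      simp only [uVerts] at hvZ
      have hwd : w ≠ d := by
        rintro rfl
        have := eq_of_w hP hZ hY (u := w) (by simp [wVerts]) (by simp [wVerts])
        simp only [Sum.inr.injEq, Prod.mk.injEq, true_and] at this
        exact hvM (this ▸ hvZ)
      rcases lt_or_gt_of_ne hwd with hwd | hwd
      · have hNM := same_inr h hZ hY hwd
        have hL' : ∀ l ∈ L, w < l := fun l hl => hwd.trans (hL l hl)
        by_cases hall : ∀ x ∈ N, c < x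
        · refine ih _ ?_ hX hZ hL' hall rfl
          rw [← hn]
          apply Finset.card_lt_card
          rw [Finset.ssubset_iff_of_subset]
          · refine ⟨v, by simpa using ⟨hcv, hNM v hvZ⟩, ?_⟩
            simp only [Finset.mem_filter, Finset.mem_univ, true_and, not_and]
            exact fun _ hc => lt_irrefl _ (hc v hvZ)
          · intro x hx
            simp only [Finset.mem_filter, Finset.mem_univ, true_and] at hx ⊢
            exact ⟨hx.1, fun m hm => (hx.2 v hvZ).trans (hNM v hvZ m hm)⟩
        · push Not at hall
          obtain ⟨x, hx, hxc⟩ := hall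
          have hxc' : x < c := by
            refine lt_of_le_of_ne hxc ?_
            rintro rfl
            simpa using eq_of_u hP hX hZ (u := x) (by simp [uVerts]) hx
          exact no_center_in_scope h hX hZ hL' hvZ hcv hx hxc'
      · exact absurd (same_inr h hY hZ hwd k hmax v hvZ) hvk.not_gt
  have bd : ∀ x ∈ insert c (M.erase k), c ≤ x ∧ x < k := by
    intro x hx
    rcases Finset.mem_insert.1 hx with rfl | hx
    · exact ⟨le_rfl, hck⟩
    · rw [Finset.mem_erase] at hx
      exact ⟨(hM x hx.2).le, lt_of_le_of_ne (hle x hx.2) hx.1⟩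
  have hcM : c ∉ M := fun hc => lt_irrefl _ (hM c hc)
  have hcard : (insert c (M.erase k)).card = M.card := by
    rw [Finset.card_insert_of_notMem (by simp [hcM]), Finset.card_erase_of_mem hmax]
    have := Finset.card_pos.2 hMne
    omega
  refine exchange_center h hX hY hL hmax hck (Or.inr ⟨?_, hle, ?_⟩)
  · calc (hull (insert c (M.erase k))).card ≤ (insert c (M.erase k)).card := by
          apply Finset.card_le_card
          intro z hz
          obtain ⟨a, ha, b, hb, haz, hzb⟩ := mem_hull.1 hz
          have hzk : z < k := hzb.trans_lt (bd b hb).2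
          rcases ((bd a ha).1.trans haz).eq_or_lt with h1 | h1
          · simp [h1]
          · exact Finset.mem_insert_of_mem (Finset.mem_erase.2 ⟨hzk.ne, fill z h1 hzk.le⟩)
      _ = M.card := hcard
      _ ≤ (hull M).card := Finset.card_le_card (subset_hull M)
  · intro Z hZ hZX hZY
    simp only [crossNum_eq_sum _ Z]
    rw [← Finset.sum_add_distrib, ← Finset.sum_add_distrib]
    apply Finset.sum_le_sum
    rintro ⟨u, w⟩ he
    have heu := (edges_verts he).1
    simp only at heu
    have huc : u ≠ c := by
      rintro rfl; exact hZX (eq_of_u hP hZ hX heu (by simp [uVerts]))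
    have huM : u ∉ M := fun hc => hZY (eq_of_u hP hZ hY heu hc)
    -- The edges of `Z` see all of `c` and `M` from the same side.
    have hside : u < c ∨ k < u := by
      by_contra! hc
      exact huM (fill u (lt_of_le_of_ne hc.1 huc.symm) hc.2)
    have hconst : ∀ x, c ≤ x → x ≤ k → ∀ y, Cross (x, y) (u, w) ↔ Cross (c, y) (u, w) := by
      intro x h1 h2 y
      rcases hside with h3 | h3
      · have h4 : u < x := h3.trans_le h1
        simp [Cross, h3, h4, h3.not_gt, h4.not_gt]
      · have h4 : x < u := h2.trans_lt h3
        have h5 : c < u := hck.trans h3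
        simp [Cross, h4, h5, h4.not_gt, h5.not_gt]
    simp only [card_edges_inl, card_edges_inr]
    apply le_of_eq
    congr 1
    · congr 1
      exact Finset.filter_congr fun y _ => hconst k hck.le le_rfl y
    · rw [Finset.filter_congr fun x hx => hconst x (bd x hx).1 (bd x hx).2.le d,
        Finset.filter_congr fun x hx => hconst x (hM x hx).le (hle x hx) d]
      by_cases hcr : Cross (c, d) (u, w) <;> simp [hcr, hcard]

/-- If each star has a leaf right of the other's center, then each also has one left of it. -/
lemma mixed_right {E : U → W → Prop} {s : ℕ} {P : Finset (BStar U W)} (h : IsMin E s P)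
    {c : U} {L : Finset W} {d : W} {M : Finset U}
    (hX : Sum.inl (c, L) ∈ P) (hY : Sum.inr (d, M) ∈ P)
    {l : W} {m : U} (hl : l ∈ L) (hm : m ∈ M) (hcm : c < m) (hdl : d < l) :
    (∃ l' ∈ L, l' ≤ d) ∧ (∃ m' ∈ M, m' ≤ c) := by
  have hP := h.2.2.1
  have hcM : ∀ x ∈ M, x ≠ c := by
    rintro x hx rfl
    simpa using eq_of_u hP hX hY (u := x) (by simp [uVerts]) hx
  have hdL : ∀ x ∈ L, x ≠ d := by
    rintro x hx rfl
    simpa using eq_of_w hP hX hY (u := x) hx (by simp [wVerts])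
  by_cases h1 : ∃ l' ∈ L, l' ≤ d <;> by_cases h2 : ∃ m' ∈ M, m' ≤ c
  · exact ⟨h1, h2⟩
  · push Not at h2
    obtain ⟨l', hl', h1⟩ := h1
    exact (no_center_in_scope h.swap (c := d) (d := c) (L := M) (M := L)
      (mem_swapP.2 hY) (mem_swapP.2 hX) h2 hl hdl hl' (lt_of_le_of_ne h1 (hdL l' hl'))).elim
  · push Not at h1
    obtain ⟨m', hm', h2⟩ := h2
    exact (no_center_in_scope h hX hY h1 hm hcm hm' (lt_of_le_of_ne h2 (hcM m' hm'))).elim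
  · push Not at h1 h2
    exact (no_both_right h _ hX hY h1 h2 rfl).elim

/-- Crossing stars with centers in different parts are interleaving. -/
lemma mixed {E : U → W → Prop} {s : ℕ} {P : Finset (BStar U W)} (h : IsMin E s P)
    {c : U} {L : Finset W} {d : W} {M : Finset U}
    (hX : Sum.inl (c, L) ∈ P) (hY : Sum.inr (d, M) ∈ P)
    {l : W} {m : U} (hl : l ∈ L) (hm : m ∈ M) (hcr : Cross (c, l) (m, d)) :
    c ∈ hull M ∧ d ∈ hull L := by
  rcases hcr with ⟨h1, h2⟩ | ⟨h1, h2⟩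
  · obtain ⟨⟨l', hl', h3⟩, m', hm', h4⟩ := mixed_right h hX hY hl hm h1 h2
    exact ⟨mem_hull.2 ⟨m', hm', m, hm, h4, le_of_lt h1⟩,
      mem_hull.2 ⟨l', hl', l, hl, h3, le_of_lt h2⟩⟩
  · obtain ⟨⟨l', hl', h3⟩, m', hm', h4⟩ :=
      mixed_right (U := Uᵒᵈ) (W := Wᵒᵈ) h.dual hX hY hl hm h1 h2
    exact ⟨mem_hull.2 ⟨m, hm, m', hm', le_of_lt h1, h4⟩,
      mem_hull.2 ⟨l, hl, l', hl', le_of_lt h2, h3⟩⟩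

/-- A vertex of `U` lies in the scope of at most one `W`-centered star, because the scopes of
such stars are separated. -/
lemma unique_scope {E : U → W → Prop} {s : ℕ} {P : Finset (BStar U W)} (h : IsMin E s P)
    {c d : W} {A B : Finset U} {u : U} (hX : Sum.inr (c, A) ∈ P) (hY : Sum.inr (d, B) ∈ P)
    (hA : u ∈ hull A) (hB : u ∈ hull B) :
    (Sum.inr (c, A) : BStar U W) = Sum.inr (d, B) := by
  obtain ⟨a, ha, b, hb, h1, h2⟩ := mem_hull.1 hA
  obtain ⟨a', ha', b', hb', h3, h4⟩ := mem_hull.1 hB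
  rcases lt_trichotomy c d with hcd | hcd | hcd
  · exact absurd (same_inr h hX hY hcd b hb a' ha') (h3.trans h2).not_gt
  · subst hcd
    exact eq_of_w h.2.2.1 hX hY (u := c) (by simp [wVerts]) (by simp [wVerts])
  · exact absurd (same_inr h hY hX hcd b' hb' a ha) (h1.trans h4).not_gt

end Duality

end BStar

open BStar in
/-- In an `s`-star partition of minimum score of a bipartite graph with a strong
ordering, every star `X` interleaves with at most one other star, and is
non-crossing with all remaining stars. -/
theorem stmt3 {U W : Type*} [LinearOrder U] [LinearOrder W] [Fintype U] [Fintype W]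
    (E : U → W → Prop)
    (hstrong : ∀ u u' w w', E u w → E u' w' → u < u' → w' < w → E u w' ∧ E u' w)
    (s : ℕ) (hs : 1 ≤ s) (P : Finset (BStar U W))
    (hP : IsPartition E s P)
    (hmin : ∀ Q : Finset (BStar U W), IsPartition E s Q →
      ¬ toLex (score Q) < toLex (score P)) :
    ∀ X ∈ P,
      (∀ Y ∈ P, ∀ Y' ∈ P, Y ≠ X → Y' ≠ X →
        Interleaving X Y → Interleaving X Y' → Y = Y') ∧
      (∀ Z ∈ P, Z ≠ X → ¬ Interleaving X Z → NonCrossing X Z) := by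
  have h : IsMin E s P := ⟨hstrong, hs, hP, hmin⟩
  intro X hX
  constructor
  · intro Y hY Y' hY' _ _ h1 h2
    rcases X with ⟨c, L⟩ | ⟨c, L⟩
    · rcases Y with ⟨d, M⟩ | ⟨d, M⟩
      · simp [Interleaving, CenterInScope, scopeU] at h1
      rcases Y' with ⟨d', M'⟩ | ⟨d', M'⟩
      · simp [Interleaving, CenterInScope, scopeU] at h2
      refine unique_scope h hY hY' (u := c) (mem_hull.2 ?_) (mem_hull.2 ?_)
      · simpa [CenterInScope, scopeU] using h1.1
      · simpa [CenterInScope, scopeU] using h2.1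
    · rcases Y with ⟨d, M⟩ | ⟨d, M⟩
      swap
      · simp [Interleaving, CenterInScope, scopeW] at h1
      rcases Y' with ⟨d', M'⟩ | ⟨d', M'⟩
      swap
      · simp [Interleaving, CenterInScope, scopeW] at h2
      have := unique_scope h.swap (c := d) (d := d') (A := M) (B := M') (u := c)
        (mem_swapP.2 hY) (mem_swapP.2 hY') (mem_hull.2 ?_) (mem_hull.2 ?_)
      · exact congrArg Sum.swap this
      · simpa [CenterInScope, scopeW] using h1.1
      · simpa [CenterInScope, scopeW] using h2.1
  · intro Z hZ hne hni
    rw [NonCrossing, crossNum_eq_zero_iff]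
    intro e he f hf hcr
    rcases X with ⟨c, L⟩ | ⟨c, L⟩ <;> rcases Z with ⟨d, M⟩ | ⟨d, M⟩ <;>
      simp only [edges, Finset.mem_image] at he hf <;>
      obtain ⟨l, hl, rfl⟩ := he <;> obtain ⟨m, hm, rfl⟩ := hf
    · rcases hcr with ⟨h1, h2⟩ | ⟨h1, h2⟩
      · exact absurd (same_inl h hX hZ h1 l hl m hm) h2.not_gt
      · exact absurd (same_inl h hZ hX h1 m hm l hl) h2.not_gt
    · obtain ⟨h1, h2⟩ := mixed h hX hZ hl hm hcr
      exact hni ⟨by simpa [CenterInScope, scopeU] using mem_hull.1 h1,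
        by simpa [CenterInScope, scopeW] using mem_hull.1 h2⟩
    · obtain ⟨h1, h2⟩ := mixed h hZ hX hm hl ((cross_comm _ _).1 hcr)
      exact hni ⟨by simpa [CenterInScope, scopeW] using mem_hull.1 h2,
        by simpa [CenterInScope, scopeU] using mem_hull.1 h1⟩
    · rcases hcr with ⟨h1, h2⟩ | ⟨h1, h2⟩
      · exact absurd (same_inr h hZ hX h2 m hm l hl) h1.not_gt
      · exact absurd (same_inr h hX hZ h2 l hl m hm) h1.not_gt
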